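/- Let F : ℝ^d → ℝ be twice continuously differentiable, let (Z, P_z) be a probability space, and let ĝ : ℝ^d × Z → ℝ^d and Ĥ : ℝ^d × Z → ℝ^{d×d} be such that for every z, the map x ↦ ĝ(x, z) is differentiable with Jacobian Ĥ(x, z), and E_{z∼P_z}‖Ĥ(x, z) − ∇²F(x)‖_op² ≤ σ₂² for all x ∈ ℝ^d (assume the needed integrability to interchange integrals). Then ĝ has the mean-squared smoothness property with parameter σ₂: for all x, y ∈ ℝ^d, E_{z∼P_z}‖ĝ(x, z) − ĝ(y, z) − (∇F(x) − ∇F(y))‖² ≤ σ₂²·‖x − y‖². -/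

import Mathlib

open MeasureTheory Filter Topology
open scoped RealInnerProductSpace ENNReal

/-- Operator-norm sublevels via a dense sequence. -/
lemma aux_opNorm_measurable {d : ℕ} {Z : Type*} [MeasurableSpace Z]
    (A : Z → EuclideanSpace ℝ (Fin d) →L[ℝ] EuclideanSpace ℝ (Fin d))
    (hA : ∀ v, Measurable fun z => ‖A z v‖) : Measurable fun z => ‖A z‖ := by
  refine measurable_of_Iic fun c => ?_
  by_cases hc : 0 ≤ c
  · have : (fun z => ‖A z‖) ⁻¹' Set.Iic c =
        ⋂ n : ℕ, {z | ‖A z (TopologicalSpace.denseSeq (EuclideanSpace ℝ (Fin d)) n)‖ ≤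
          c * ‖TopologicalSpace.denseSeq (EuclideanSpace ℝ (Fin d)) n‖} := by
      ext z
      simp only [Set.mem_preimage, Set.mem_Iic, Set.mem_iInter, Set.mem_ofPred_eq]
      constructor
      · intro h n
        exact (A z).le_of_opNorm_le h _
      · intro h
        refine ContinuousLinearMap.opNorm_le_bound _ hc fun v => ?_
        have hcl : IsClosed {v | ‖A z v‖ ≤ c * ‖v‖} :=
          isClosed_le (by fun_prop) (by fun_prop)
        refine (TopologicalSpace.denseRange_denseSeq
          (EuclideanSpace ℝ (Fin d))).induction_on (p := fun v => ‖A z v‖ ≤ c * ‖v‖) v hcl h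
    rw [this]
    exact MeasurableSet.iInter fun n => measurableSet_le (hA _) measurable_const
  · have : (fun z => ‖A z‖) ⁻¹' Set.Iic c = ∅ := by
      ext z
      simp only [Set.mem_preimage, Set.mem_Iic, Set.mem_empty_iff_false, iff_false, not_le]
      exact lt_of_lt_of_le (not_le.mp hc) (norm_nonneg _)
    rw [this]; exact MeasurableSet.empty

lemma aux_opNorm_bound {d : ℕ}
    (A : EuclideanSpace ℝ (Fin d) →L[ℝ] EuclideanSpace ℝ (Fin d)) :
    ‖A‖ ^ 2 ≤ (d : ℝ) * ∑ i, ‖A (EuclideanSpace.single i 1)‖ ^ 2 := by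
  have h1 : ‖A‖ ≤ ∑ i, ‖A (EuclideanSpace.single i 1)‖ := by
    refine ContinuousLinearMap.opNorm_le_bound _ (by positivity) fun v => ?_
    have hv : v = ∑ i, v i • EuclideanSpace.single i (1 : ℝ) := by
      ext j
      simp [Finset.sum_apply, Pi.single_apply]
    conv_lhs => rw [hv]
    rw [map_sum, Finset.sum_mul]
    refine (norm_sum_le _ _).trans (Finset.sum_le_sum fun i _ => ?_)
    rw [map_smul, norm_smul, mul_comm]
    gcongr
    exact PiLp.norm_apply_le v i
  calc ‖A‖ ^ 2 ≤ (∑ i, ‖A (EuclideanSpace.single i 1)‖) ^ 2 := by gcongr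
    _ ≤ _ := by
      have := sq_sum_le_card_mul_sum_sq (s := Finset.univ)
        (f := fun i : Fin d => ‖A (EuclideanSpace.single i 1)‖)
      simpa using this

/-- Fundamental theorem of calculus with Cauchy-Schwarz. -/
lemma aux_ftc {d : ℕ} (g : ℝ → EuclideanSpace ℝ (Fin d)) (g' : ℝ → EuclideanSpace ℝ (Fin d))
    (h : ∀ t, HasDerivAt g (g' t) t) :
    ‖g 1 - g 0‖ₑ ^ 2 ≤ ∫⁻ t in Set.Icc (0:ℝ) 1, ‖g' t‖ₑ ^ 2 := by
  have hg' : g' = deriv g := by ext1 t; exact (h t).deriv.symm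
  have hmeas : StronglyMeasurable g' := by
    rw [hg']; exact (measurable_deriv g).stronglyMeasurable
  have hprob : IsProbabilityMeasure (volume.restrict (Set.Icc (0:ℝ) 1)) := ⟨by simp⟩
  have hCS : (∫⁻ t in Set.Icc (0:ℝ) 1, ‖g' t‖ₑ) ^ 2 ≤ ∫⁻ t in Set.Icc (0:ℝ) 1, ‖g' t‖ₑ ^ 2 := by
    have h12 := eLpNorm_le_eLpNorm_of_exponent_le (μ := volume.restrict (Set.Icc (0:ℝ) 1))
      (p := 1) (q := 2) (f := g') (by norm_num) hmeas.aestronglyMeasurable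
    rw [eLpNorm_one_eq_lintegral_enorm] at h12
    have h2 := eLpNorm_nnreal_pow_eq_lintegral (μ := volume.restrict (Set.Icc (0:ℝ) 1))
      (p := 2) (f := g') (by norm_num)
    have h3 : eLpNorm g' 2 (volume.restrict (Set.Icc (0:ℝ) 1)) ^ 2 =
      ∫⁻ t in Set.Icc (0:ℝ) 1, ‖g' t‖ₑ ^ 2 := by
      simpa using h2
    rw [← h3]
    gcongr
  refine le_trans ?_ hCS
  gcongr
  by_cases hfin : ∫⁻ t in Set.Icc (0:ℝ) 1, ‖g' t‖ₑ = ⊤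
  · rw [hfin]; exact le_top
  have hint : IntegrableOn g' (Set.Icc 0 1) :=
    ⟨hmeas.aestronglyMeasurable, lt_top_iff_ne_top.mpr hfin⟩
  have hii : IntervalIntegrable g' volume 0 1 :=
    (intervalIntegrable_iff_integrableOn_Icc_of_le zero_le_one).mpr hint
  rw [← intervalIntegral.integral_eq_sub_of_hasDerivAt (fun t _ => h t) hii,
    intervalIntegral.integral_of_le zero_le_one, ← integral_Icc_eq_integral_Ioc]
  exact enorm_integral_le_lintegral_enorm _

set_option maxHeartbeats 1600000 in
lemma aux_core {d : ℕ} {Z : Type*} [MeasurableSpace Z]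
    (P : Measure Z) [IsProbabilityMeasure P] (σ : ℝ)
    (G : EuclideanSpace ℝ (Fin d) → Z → EuclideanSpace ℝ (Fin d))
    (D : EuclideanSpace ℝ (Fin d) → Z →
      EuclideanSpace ℝ (Fin d) →L[ℝ] EuclideanSpace ℝ (Fin d))
    (hD : ∀ z x, HasFDerivAt (fun w => G w z) (D x z) x)
    (hm : ∀ x y, Measurable fun z => ‖G x z - G y z‖)
    (hvar : ∀ x, ∫ z, ‖D x z‖ ^ 2 ∂P ≤ σ ^ 2)
    (hI : ∀ x v, ∀ᵐ t ∂((volume : Measure ℝ).restrict (Set.Icc 0 1)),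
      Integrable (fun z => ‖D (x + t • v) z v‖ ^ 2) P)
    (x v : EuclideanSpace ℝ (Fin d)) :
    ∫⁻ z, ‖G (x + v) z - G x z‖ₑ ^ 2 ∂P ≤ ENNReal.ofReal (σ ^ 2 * ‖v‖ ^ 2) := by
  have hGc : ∀ z, Continuous fun w => G w z := fun z =>
    continuous_iff_continuousAt.mpr fun x => (hD z x).continuousAt
  -- derivative along lines
  have hline : ∀ z x v (t : ℝ), HasDerivAt (fun t : ℝ => G (x + t • v) z) (D (x + t • v) z v) t := by
    intro z x v t
    have h1 : HasDerivAt (fun t : ℝ => x + t • v) v t := by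
      simpa using ((hasDerivAt_id t).smul_const v).const_add x
    exact (hD z (x + t • v)).comp_hasDerivAt t h1
  -- joint measurability
  have hjm : ∀ v, Measurable fun p : EuclideanSpace ℝ (Fin d) × Z => ‖D p.1 p.2 v‖ := by
    intro v
    let u : ℕ → ℝ := fun n => 1 / ((n:ℝ) + 1)
    have hu : Tendsto u atTop (𝓝[≠] 0) := by
      refine tendsto_nhdsWithin_iff.mpr ⟨tendsto_one_div_add_atTop_nhds_zero_nat, ?_⟩
      exact Eventually.of_forall fun n => by
        simp only [u, Set.mem_compl_iff, Set.mem_singleton_iff]; positivity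
    refine measurable_of_tendsto_metrizable
      (f := fun (n : ℕ) (p : EuclideanSpace ℝ (Fin d) × Z) =>
        |(u n)⁻¹| * ‖G (p.1 + u n • v) p.2 - G p.1 p.2‖) (fun n => ?_) ?_
    · refine Measurable.const_mul ?_ _
      exact measurable_uncurry_of_continuous_of_measurable
        (u := fun (a : EuclideanSpace ℝ (Fin d)) (z : Z) => ‖G (a + u n • v) z - G a z‖)
        (fun z => by have := hGc z; fun_prop) (fun a => hm _ _)
    · rw [tendsto_pi_nhds]
      rintro ⟨a, z⟩
      have h1 := (hline z a v 0).tendsto_slope_zero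
      have h2 := (h1.comp hu).norm
      simpa [Function.comp_def, norm_smul] using h2
  let φ : EuclideanSpace ℝ (Fin d) → EuclideanSpace ℝ (Fin d) → ℝ≥0∞ :=
    fun v a => ∫⁻ z, ‖D a z v‖ₑ ^ 2 ∂P
  have hjme : ∀ v, Measurable fun p : EuclideanSpace ℝ (Fin d) × Z => ‖D p.1 p.2 v‖ₑ ^ 2 := by
    intro v
    have : (fun p : EuclideanSpace ℝ (Fin d) × Z => ‖D p.1 p.2 v‖ₑ ^ 2) =
        fun p => ENNReal.ofReal ‖D p.1 p.2 v‖ ^ 2 := by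
      ext1 p; rw [ofReal_norm]
    rw [this]
    exact (hjm v).ennreal_ofReal.pow_const 2
  have hφ : ∀ v, Measurable (φ v) := fun v => (hjme v).lintegral_prod_right'
  have hsq : ∀ w : EuclideanSpace ℝ (Fin d), ‖w‖ₑ ^ 2 = ENNReal.ofReal (‖w‖ ^ 2) := fun w => by
    rw [← ofReal_norm, ENNReal.ofReal_pow (norm_nonneg _)]
  -- finiteness almost everywhere
  have hfin : ∀ v, ∀ᵐ a, φ v a < ⊤ := by
    intro v
    have hs : MeasurableSet {a | φ v a < ⊤} := measurableSet_lt (hφ v) measurable_const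
    refine ae_mem_of_ae_add_linearMap_mem (LinearMap.toSpanSingleton ℝ _ v)
      (volume : Measure ℝ) volume hs fun a => ?_
    have h01 : ∀ a, ∀ᵐ t ∂((volume : Measure ℝ).restrict (Set.Icc 0 1)), φ v (a + t • v) < ⊤ := by
      intro a
      filter_upwards [hI a v] with t ht
      have := ht.lintegral_lt_top
      simpa only [φ, hsq] using this
    have hnull : ∀ n : ℤ, ∀ᵐ t : ℝ, t ∈ Set.Icc (n:ℝ) (n+1) → φ v (a + t • v) < ⊤ := by
      intro n
      have h := (ae_restrict_iff' measurableSet_Icc).mp (h01 (a + (n:ℝ) • v))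
      have h' := (measurePreserving_sub_right (volume : Measure ℝ) (n:ℝ)).quasiMeasurePreserving.ae h
      filter_upwards [h'] with t ht htn
      have := ht ⟨by linarith [htn.1], by linarith [htn.2]⟩
      rwa [add_assoc, ← add_smul, add_sub_cancel] at this
    filter_upwards [ae_all_iff.mpr hnull] with t ht
    have := ht ⌊t⌋ ⟨Int.floor_le t, (Int.lt_floor_add_one t).le⟩
    show φ v (a + LinearMap.toSpanSingleton ℝ _ v t) < ⊤
    rw [LinearMap.toSpanSingleton_apply]
    exact this
  -- variance bound almost everywhere
  have hgood : ∀ᵐ a, ∀ v, φ v a ≤ ENNReal.ofReal (σ ^ 2 * ‖v‖ ^ 2) := by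
    have hall : ∀ᵐ a, ∀ i : Fin d, φ (EuclideanSpace.single i 1) a < ⊤ :=
      ae_all_iff.mpr fun i => hfin _
    filter_upwards [hall] with a ha v
    have hmn : ∀ v, Measurable fun z => ‖D a z v‖ := fun v => by
      have h := Measurable.comp (hjm v) (f := fun z : Z => (a, z)) measurable_prodMk_left
      exact h
    have hmD : Measurable fun z => ‖D a z‖ := aux_opNorm_measurable _ hmn
    have hint : Integrable (fun z => ‖D a z‖ ^ 2) P := by
      refine Integrable.mono' (g := fun z => (d : ℝ) *
        ∑ i, ‖D a z (EuclideanSpace.single i 1)‖ ^ 2) ?_ (hmD.pow_const 2).aestronglyMeasurable ?_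
      · refine Integrable.const_mul (integrable_finsetSum _ fun i _ => ?_) _
        refine ⟨((hmn _).pow_const 2).aestronglyMeasurable, ?_⟩
        have := ha i
        simp only [φ] at this
        simpa [HasFiniteIntegral] using this
      · refine Eventually.of_forall fun z => ?_
        rw [Real.norm_of_nonneg (by positivity)]
        exact aux_opNorm_bound _
    calc φ v a ≤ ∫⁻ z, ENNReal.ofReal (‖D a z‖ ^ 2 * ‖v‖ ^ 2) ∂P := by
          refine lintegral_mono fun z => ?_
          rw [hsq, ← mul_pow]
          gcongr
          exact (D a z).le_opNorm v
      _ = ENNReal.ofReal (∫ z, ‖D a z‖ ^ 2 * ‖v‖ ^ 2 ∂P) :=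
          (ofReal_integral_eq_lintegral_ofReal (hint.mul_const _)
            (Eventually.of_forall fun z => by positivity)).symm
      _ ≤ _ := by
          rw [integral_mul_const]
          gcongr
          exact hvar a
  -- the bound for almost every base point
  have hae : ∀ᵐ a, ∫⁻ z, ‖G (a + v) z - G a z‖ₑ ^ 2 ∂P ≤ ENNReal.ofReal (σ ^ 2 * ‖v‖ ^ 2) := by
    have hs : MeasurableSet {a | φ v a ≤ ENNReal.ofReal (σ ^ 2 * ‖v‖ ^ 2)} :=
      measurableSet_le (hφ v) measurable_const
    have h1 := (ae_ae_add_linearMap_mem_iff (LinearMap.toSpanSingleton ℝ _ v)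
      (volume : Measure ℝ) volume hs).mpr (by filter_upwards [hgood] with a ha using ha v)
    filter_upwards [h1] with a ha
    calc ∫⁻ z, ‖G (a + v) z - G a z‖ₑ ^ 2 ∂P
        ≤ ∫⁻ z, (∫⁻ t in Set.Icc (0:ℝ) 1, ‖D (a + t • v) z v‖ₑ ^ 2) ∂P := by
          refine lintegral_mono fun z => ?_
          have := aux_ftc (fun t : ℝ => G (a + t • v) z) _ (hline z a v)
          simpa using this
      _ = ∫⁻ t in Set.Icc (0:ℝ) 1, φ v (a + t • v) := by
          refine lintegral_lintegral_swap (Measurable.aemeasurable ?_)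
          have h := Measurable.comp (hjme v)
            (f := fun p : Z × ℝ => (a + p.2 • v, p.1)) (by fun_prop)
          exact h
      _ ≤ ∫⁻ t in Set.Icc (0:ℝ) 1, ENNReal.ofReal (σ ^ 2 * ‖v‖ ^ 2) := by
          refine lintegral_mono_ae (ae_restrict_of_ae ?_)
          filter_upwards [ha] with t ht
          have ht' : φ v (a + LinearMap.toSpanSingleton ℝ _ v t) ≤
            ENNReal.ofReal (σ ^ 2 * ‖v‖ ^ 2) := ht
          rwa [LinearMap.toSpanSingleton_apply] at ht'
      _ = _ := by simp
  -- pass to the limit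
  have hdense := Measure.dense_of_ae hae
  obtain ⟨s, hs, hlim⟩ := mem_closure_iff_seq_limit.mp (hdense x)
  have hme : ∀ a b, Measurable fun z => ‖G a z - G b z‖ₑ ^ 2 := by
    intro a b
    have : (fun z => ‖G a z - G b z‖ₑ ^ 2) =
        fun z => ENNReal.ofReal ‖G a z - G b z‖ ^ 2 := by
      ext1 p; rw [ofReal_norm]
    rw [this]
    exact (hm a b).ennreal_ofReal.pow_const 2
  calc ∫⁻ z, ‖G (x + v) z - G x z‖ₑ ^ 2 ∂P
      = ∫⁻ z, liminf (fun n => ‖G (s n + v) z - G (s n) z‖ₑ ^ 2) atTop ∂P := by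
        refine lintegral_congr fun z => ?_
        refine (Tendsto.liminf_eq ?_).symm
        have hc : Continuous fun a => ‖G (a + v) z - G a z‖ₑ ^ 2 := by
          have := hGc z
          have h3 : Continuous fun a => G (a + v) z - G a z := by fun_prop
          exact (ENNReal.continuous_pow 2).comp h3.enorm
        exact (hc.tendsto x).comp hlim
    _ ≤ liminf (fun n => ∫⁻ z, ‖G (s n + v) z - G (s n) z‖ₑ ^ 2 ∂P) atTop :=
        lintegral_liminf_le fun n => hme _ _
    _ ≤ liminf (fun _ : ℕ => ENNReal.ofReal (σ ^ 2 * ‖v‖ ^ 2)) atTop :=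
        liminf_le_liminf (Eventually.of_forall hs)
    _ = _ := by simp

/-- If the stochastic Hessian estimator `HEst` is the Jacobian of the
stochastic gradient estimator `gEst`, and `HEst` has operator-norm variance at most `σ₂²`
around the true Hessian, then `gEst` is mean-squared smooth with parameter `σ₂`:
`E_z‖gEst(x,z) - gEst(y,z) - (∇F(x) - ∇F(y))‖² ≤ σ₂²‖x - y‖²`. -/
theorem stmt_7 {d : ℕ} {Z : Type*} [MeasurableSpace Z]
    (P : Measure Z) [IsProbabilityMeasure P]
    (F : EuclideanSpace ℝ (Fin d) → ℝ)
    (gradF : EuclideanSpace ℝ (Fin d) → EuclideanSpace ℝ (Fin d))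
    (hessF : EuclideanSpace ℝ (Fin d) →
      EuclideanSpace ℝ (Fin d) →L[ℝ] EuclideanSpace ℝ (Fin d))
    (σ₂ : ℝ)
    (hF : ContDiff ℝ 2 F)
    (hgrad : ∀ z, HasGradientAt F (gradF z) z)
    (hhess : ∀ z, HasFDerivAt gradF (hessF z) z)
    (gEst : EuclideanSpace ℝ (Fin d) → Z → EuclideanSpace ℝ (Fin d))
    (HEst : EuclideanSpace ℝ (Fin d) → Z →
      EuclideanSpace ℝ (Fin d) →L[ℝ] EuclideanSpace ℝ (Fin d))
    (hjac : ∀ z x, HasFDerivAt (fun w => gEst w z) (HEst x z) x)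
    (hvar : ∀ x, ∫ z, ‖HEst x z - hessF x‖ ^ 2 ∂P ≤ σ₂ ^ 2)
    -- integrability assumptions needed to interchange integrals:
    (hmss_int : ∀ x y,
      Integrable (fun z => ‖gEst x z - gEst y z - (gradF x - gradF y)‖ ^ 2) P)
    (hFub : ∀ x y, Integrable
      (fun p : ℝ × Z =>
        ‖(HEst (y + p.1 • (x - y)) p.2 - hessF (y + p.1 • (x - y))) (x - y)‖ ^ 2)
      (((volume : Measure ℝ).restrict (Set.Icc 0 1)).prod P)) :
    ∀ x y, ∫ z, ‖gEst x z - gEst y z - (gradF x - gradF y)‖ ^ 2 ∂P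
      ≤ σ₂ ^ 2 * ‖x - y‖ ^ 2 := by
  intro x y
  classical
  let s : ℕ → EuclideanSpace ℝ (Fin d) := TopologicalSpace.denseSeq _
  let G : EuclideanSpace ℝ (Fin d) → Z → EuclideanSpace ℝ (Fin d) :=
    fun x z => gEst x z - gradF x
  let D : EuclideanSpace ℝ (Fin d) → Z →
      EuclideanSpace ℝ (Fin d) →L[ℝ] EuclideanSpace ℝ (Fin d) := fun x z => HEst x z - hessF x
  have hsub : ∀ a b z, G a z - G b z = gEst a z - gEst b z - (gradF a - gradF b) := by
    intro a b z; simp only [G]; abel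
  have hD : ∀ z x, HasFDerivAt (fun w => G w z) (D x z) x := fun z x => (hjac z x).sub (hhess x)
  have hae : ∀ a b, AEMeasurable (fun z => ‖G a z - G b z‖) P := by
    intro a b
    have h1 := (hmss_int a b).aestronglyMeasurable.aemeasurable.sqrt
    refine h1.congr (Filter.Eventually.of_forall fun z => ?_)
    simp only [hsub]
    exact Real.sqrt_sq (norm_nonneg _)
  have hall : ∀ᵐ z ∂P, ∀ n m : ℕ, ‖G (s n) z - G (s m) z‖ = (hae (s n) (s m)).mk _ z :=
    ae_all_iff.mpr fun n => ae_all_iff.mpr fun m => (hae (s n) (s m)).ae_eq_mk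
  obtain ⟨T, hTsub, hTm, hTae⟩ : ∃ T : Set Z,
      (∀ z ∈ T, ∀ n m : ℕ, ‖G (s n) z - G (s m) z‖ = (hae (s n) (s m)).mk _ z) ∧
      MeasurableSet T ∧ ∀ᵐ z ∂P, z ∈ T := by
    obtain ⟨T, hT, hTm, hTsub⟩ := hall.exists_measurable_mem
    exact ⟨T, hTsub, hTm, hT⟩
  let G' : EuclideanSpace ℝ (Fin d) → Z → EuclideanSpace ℝ (Fin d) :=
    fun x z => if z ∈ T then G x z else 0
  let D' : EuclideanSpace ℝ (Fin d) → Z →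
      EuclideanSpace ℝ (Fin d) →L[ℝ] EuclideanSpace ℝ (Fin d) :=
    fun x z => if z ∈ T then D x z else 0
  have hD' : ∀ z x, HasFDerivAt (fun w => G' w z) (D' x z) x := by
    intro z x
    by_cases hz : z ∈ T
    · simpa only [G', D', if_pos hz] using hD z x
    · simpa only [G', D', if_neg hz] using hasFDerivAt_const _ x
  have hG'c : ∀ z, Continuous fun w => G' w z := fun z =>
    continuous_iff_continuousAt.mpr fun x => (hD' z x).continuousAt
  have hms : ∀ n m, Measurable fun z => ‖G' (s n) z - G' (s m) z‖ := by
    intro n m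
    have : (fun z => ‖G' (s n) z - G' (s m) z‖) = T.indicator ((hae (s n) (s m)).mk _) := by
      ext1 z
      by_cases hz : z ∈ T
      · simp only [G', if_pos hz, Set.indicator_of_mem hz]
        exact hTsub z hz n m
      · simp only [G', if_neg hz, Set.indicator_of_notMem hz, sub_self, norm_zero]
    rw [this]
    exact (hae (s n) (s m)).measurable_mk.indicator hTm
  have hseq : ∀ a, ∃ k : ℕ → ℕ, Tendsto (fun n => s (k n)) atTop (𝓝 a) := by
    intro a
    obtain ⟨u, hu, hlim⟩ := mem_closure_iff_seq_limit.mp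
      (TopologicalSpace.denseRange_denseSeq (EuclideanSpace ℝ (Fin d)) a)
    choose k hk using hu
    exact ⟨k, by simpa only [s, hk] using hlim⟩
  have hm : ∀ a b, Measurable fun z => ‖G' a z - G' b z‖ := by
    intro a b
    obtain ⟨k, hk⟩ := hseq a
    obtain ⟨l, hl⟩ := hseq b
    refine measurable_of_tendsto_metrizable
      (f := fun (n : ℕ) z => ‖G' (s (k n)) z - G' (s (l n)) z‖) (fun n => hms _ _) ?_
    rw [tendsto_pi_nhds]
    intro z
    exact ((((hG'c z).tendsto a).comp hk).sub (((hG'c z).tendsto b).comp hl)).norm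
  have hvar' : ∀ x, ∫ z, ‖D' x z‖ ^ 2 ∂P ≤ σ₂ ^ 2 := by
    intro x
    refine le_trans (le_of_eq (integral_congr_ae ?_)) (hvar x)
    filter_upwards [hTae] with z hz
    simp only [D', if_pos hz, D]
  have hI' : ∀ x v, ∀ᵐ t ∂((volume : Measure ℝ).restrict (Set.Icc 0 1)),
      Integrable (fun z => ‖D' (x + t • v) z v‖ ^ 2) P := by
    intro x v
    have h := (hFub (x + v) x).prod_right_ae
    filter_upwards [h] with t ht
    refine ht.congr ?_
    filter_upwards [hTae] with z hz
    simp only [D', if_pos hz, D, add_sub_cancel_left]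
  have hmain := aux_core P σ₂ G' D' hD' hm hvar' hI' y (x - y)
  rw [add_sub_cancel] at hmain
  rw [integral_eq_lintegral_of_nonneg_ae (Filter.Eventually.of_forall fun z => by positivity)
    (hmss_int x y).aestronglyMeasurable]
  refine ENNReal.toReal_le_of_le_ofReal (by positivity) (le_trans (le_of_eq ?_) hmain)
  refine lintegral_congr_ae ?_
  filter_upwards [hTae] with z hz
  simp only [G', if_pos hz]
  rw [hsub, ← ofReal_norm, ENNReal.ofReal_pow (norm_nonneg _)]
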